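/- Let p be a prime number and let d ≥ 0 be an integer. For every tuple (a_1, …, a_d) of elements of the finite field 𝔽_p, there exist p-adic integers x_1, …, x_d ∈ ℤ_p that are algebraically independent over ℚ (as elements of the ℚ-algebra ℚ_p) and satisfy x_i ≡ a_i (mod p) for all i, i.e. the image of each x_i under the residue map ℤ_p → 𝔽_p is a_i. -/

import Mathlib

theorem exists_transcendental_residue (p : ℕ) [Fact p.Prime] (R : Subalgebra ℚ ℚ_[p])
    [Countable R] (a : ZMod p) :
    ∃ y : ℤ_[p], Transcendental R (y : ℚ_[p]) ∧ PadicInt.toZMod y = a := by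
  obtain ⟨c, hc⟩ := ZMod.ringHom_surjective (PadicInt.toZMod (p := p)) a
  have hd : Dense {x : ℚ_[p] | IsAlgebraic R x}ᶜ :=
    (Algebraic.countable R ℚ_[p]).dense_compl ℚ_[p]
  obtain ⟨y, hy, hyt⟩ := hd.inter_open_nonempty (Metric.ball (c : ℚ_[p]) 1) Metric.isOpen_ball
    ⟨c, Metric.mem_ball_self one_pos⟩
  rw [Metric.mem_ball, dist_eq_norm] at hy
  obtain ⟨z, hzy⟩ : ∃ z : ℤ_[p], (z : ℚ_[p]) = y - c := ⟨⟨y - c, hy.le⟩, rfl⟩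
  have hz : ‖z‖ < 1 := by rw [PadicInt.norm_def, hzy]; exact hy
  refine ⟨z + c, ?_, ?_⟩
  · rw [PadicInt.coe_add, hzy, sub_add_cancel]
    exact hyt
  · have h0 : PadicInt.toZMod z = 0 := by
      rw [← RingHom.mem_ker, PadicInt.ker_toZMod, IsLocalRing.mem_maximalIdeal,
        PadicInt.mem_nonunits]
      exact hz
    rw [map_add, hc, h0, zero_add]

/-- For every prime `p`, every `d ≥ 0` and every tuple `(a_1, …, a_d)` of elements of `𝔽_p`,
there exist `p`-adic integers `x_1, …, x_d` that are algebraically independent over `ℚ`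
(as elements of `ℚ_p`) and satisfy `x_i ≡ a_i (mod p)` for all `i`. -/
theorem stmt_8 (p : ℕ) [Fact p.Prime] (d : ℕ) (a : Fin d → ZMod p) :
    ∃ x : Fin d → ℤ_[p],
      AlgebraicIndependent ℚ (fun i : Fin d => ((x i : ℚ_[p]))) ∧
        ∀ i : Fin d, PadicInt.toZMod (x i) = a i := by
  induction d with
  | zero =>
    refine ⟨fun i => i.elim0, ?_, fun i => i.elim0⟩
    exact algebraicIndependent_empty_type_iff.mpr (algebraMap ℚ ℚ_[p]).injective
  | succ d ih =>
    obtain ⟨x, hx, hxa⟩ := ih (fun i => a i.succ)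
    have hM : Countable (MvPolynomial (Fin d) ℚ) := by
      rw [← Cardinal.mk_le_aleph0_iff]
      exact MvPolynomial.cardinalMk_le_max.trans (by simp)
    have : Countable (Algebra.adjoin ℚ (Set.range fun i : Fin d => (x i : ℚ_[p]))) :=
      hx.aevalEquiv.symm.injective.countable
    obtain ⟨y, hy, hya⟩ := exists_transcendental_residue p
      (Algebra.adjoin ℚ (Set.range fun i : Fin d => (x i : ℚ_[p]))) (a 0)
    refine ⟨Fin.cons y x, ?_, ?_⟩
    · have h := (hx.option_iff_transcendental (y : ℚ_[p])).mpr hy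
      have h2 := h.comp (finSuccEquiv d) (finSuccEquiv d).injective
      convert h2 using 1
      funext i
      refine Fin.cases ?_ (fun j => ?_) i <;> simp
    · intro i
      refine Fin.cases ?_ (fun j => ?_) i
      · simpa using hya
      · simpa using hxa j
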